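/- arXiv:1609.00867 — 3 statements merged into one kernel-verified Lean document; each statement's English description precedes it below -/
import Mathlib

section
/- Let S be a set of n points in the plane in general position. Then A(S) = 4·□(S) + 3·△(S) and B(S) = 8·□(S) + 9·△(S), where □(S) is the number of 4-element subsets of S in convex position and △(S) is the number of 4-element subsets of S not in convex position. -/
open Finset

/-- The plane. -/
abbrev Plane : Type := ℝ × ℝ

/-- The determinant det(q - p, r - p). -/
def det2 (p q r : Plane) : ℝ :=
  (q.1 - p.1) * (r.2 - p.2) - (q.2 - p.2) * (r.1 - p.1)

/-- `r` is strictly to the left of the directed line from `p` to `q`. -/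
def LeftOf (p q r : Plane) : Prop := 0 < det2 p q r

/-- `r` is strictly to the right of the directed line from `p` to `q`. -/
def RightOf (p q r : Plane) : Prop := det2 p q r < 0

/-- A finite point set is in general position if no three of its points are collinear. -/
def GenPos (S : Finset Plane) : Prop :=
  ∀ p ∈ S, ∀ q ∈ S, ∀ r ∈ S, p ≠ q → p ≠ r → q ≠ r →
    ¬ Collinear ℝ ({p, q, r} : Set Plane)

open Classical in
/-- `lam S p q` is the number of points of `S` strictly to the left of the directed
line from `p` to `q`, with `lam S p p = 0`. -/
noncomputable def lam (S : Finset Plane) (p q : Plane) : ℕ :=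
  if p = q then 0 else (S.filter fun r => LeftOf p q r).card

/-- A finite point set is in convex position if no one of its points lies in the
convex hull of the others. -/
def ConvexPos (P : Finset Plane) : Prop :=
  ∀ x ∈ P, x ∉ convexHull ℝ ((P.erase x : Finset Plane) : Set Plane)

open Classical in
/-- The number of type-A patterns of `S`: tuples `((p,q),{r,s})` of four distinct
points of `S` with both `r` and `s` strictly to the left of the directed line from
`p` to `q`. -/
noncomputable def patACount (S : Finset Plane) : ℕ :=
  ∑ p ∈ S, ∑ q ∈ S.erase p,
    (((S \ {p, q}).powersetCard 2).filter fun e => ∀ r ∈ e, LeftOf p q r).card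

open Classical in
/-- The number of type-B patterns of `S`: tuples `((p,q),{r,s})` of four distinct
points of `S` such that not both `r` and `s` are strictly to the left of the
directed line from `p` to `q`. -/
noncomputable def patBCount (S : Finset Plane) : ℕ :=
  ∑ p ∈ S, ∑ q ∈ S.erase p,
    (((S \ {p, q}).powersetCard 2).filter fun e => ¬ ∀ r ∈ e, LeftOf p q r).card

open Classical in
/-- The number of 4-element subsets of `S` in convex position. -/
noncomputable def squareCount (S : Finset Plane) : ℕ :=
  ((S.powersetCard 4).filter fun P => ConvexPos P).card

open Classical in
/-- The number of 4-element subsets of `S` not in convex position. -/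
noncomputable def triCount (S : Finset Plane) : ℕ :=
  ((S.powersetCard 4).filter fun P => ¬ ConvexPos P).card

/-!
Every pattern lives in exactly one four-point subset `P`, and each `P` carries twelve patterns, so
it suffices to count the type-A patterns of `P`, that is, the directed edges of its convex hull.

Four points of the plane satisfy an affine dependence `∑ w x = 0`, `∑ w x • x = 0`. The function
`det2 p q` is affine and vanishes at `p` and `q`, so for `P = {p, q, r, s}` it gives
`w r * det2 p q r + w s * det2 p q s = 0`: the points `r` and `s` lie on the same side of the line
`pq` exactly when `w r` and `w s` have opposite signs. Sending a hull edge to the complementary pair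
therefore identifies the hull edges with the pairs of a positive and a negative weight. By Radon's
theorem the signs split 2 + 2 when `P` is in convex position and 3 + 1 otherwise, which gives
2 · 2 = 4 and 3 · 1 = 3 edges.
-/

section Patterns

variable {α M : Type*} [DecidableEq α]

lemma sum_powersetCard_erase [AddCommMonoid M] (S : Finset α) (n : ℕ)
    (f : α → Finset α → M) :
    ∑ p ∈ S, ∑ Q ∈ (S.erase p).powersetCard n, f p Q =
      ∑ P ∈ S.powersetCard (n + 1), ∑ p ∈ P, f p (P.erase p) := by
  rw [sum_sigma', sum_sigma']
  refine sum_bij' (fun x _ ↦ ⟨insert x.1 x.2, x.1⟩) (fun y _ ↦ ⟨y.2, y.1.erase y.2⟩)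
    ?_ ?_ ?_ ?_ ?_
  all_goals simp only [mem_sigma, mem_powersetCard, subset_erase]
  · rintro ⟨p, Q⟩ ⟨hp, ⟨hQS, hpQ⟩, hQ⟩
    exact ⟨⟨insert_subset hp hQS, by rw [card_insert_of_notMem hpQ, hQ]⟩, mem_insert_self p Q⟩
  · rintro ⟨P, p⟩ ⟨⟨hPS, hP⟩, hp⟩
    exact ⟨hPS hp, ⟨(erase_subset p P).trans hPS, notMem_erase p P⟩,
      by rw [card_erase_of_mem hp, hP, Nat.add_sub_cancel]⟩
  · rintro ⟨p, Q⟩ ⟨-, ⟨-, hpQ⟩, -⟩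
    simp only [erase_insert hpQ]
  · rintro ⟨P, p⟩ ⟨-, hp⟩
    simp only [insert_erase hp]
  · rintro ⟨p, Q⟩ ⟨-, ⟨-, hpQ⟩, -⟩
    simp only [erase_insert hpQ]

lemma sum_powersetCard_sdiff_pair [AddCommMonoid M] (S : Finset α) (n : ℕ)
    (f : α → α → Finset α → M) :
    ∑ p ∈ S, ∑ q ∈ S.erase p, ∑ e ∈ (S \ {p, q}).powersetCard n, f p q e =
      ∑ P ∈ S.powersetCard (n + 2), ∑ p ∈ P, ∑ q ∈ P.erase p, f p q (P \ {p, q}) := by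
  have sdiff_pair (T : Finset α) (p q : α) : T \ {p, q} = (T.erase p).erase q := by
    rw [sdiff_insert, sdiff_singleton_eq_erase, erase_right_comm]
  simp only [sdiff_pair, sum_powersetCard_erase]

lemma exists_sdiff_pair_eq_pair {P : Finset α} (hP : #P = 4) {p q : α} (hp : p ∈ P)
    (hq : q ∈ P) (hpq : p ≠ q) :
    ∃ r ∈ P, ∃ s ∈ P, r ≠ s ∧ P \ {p, q} = {r, s} ∧ P \ {r, s} = {p, q} := by
  have hsub : {p, q} ⊆ P := insert_subset hp (singleton_subset_iff.2 hq)
  obtain ⟨r, s, hrs, h⟩ := card_eq_two.1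
    (show #(P \ {p, q}) = 2 by rw [card_sdiff_of_subset hsub, hP, card_pair hpq])
  have hmem : ∀ x ∈ ({r, s} : Finset α), x ∈ P := fun x hx ↦ (mem_sdiff.1 (h ▸ hx)).1
  exact ⟨r, hmem r (by simp), s, hmem s (by simp), hrs, h,
    by rw [← h, Finset.sdiff_sdiff_eq_self hsub]⟩

lemma finset_pair_eq_pair_iff {a b c d : α} :
    ({a, b} : Finset α) = {c, d} ↔ a = c ∧ b = d ∨ a = d ∧ b = c := by
  rw [← coe_inj, coe_pair, coe_pair, Set.pair_eq_pair_iff]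

lemma existsUnique_pair_of_xor {R : α → α → Prop} {p q : α} (hR : Xor (R p q) (R q p)) :
    ∃! e : α × α, ({e.1, e.2} : Finset α) = {p, q} ∧ R e.1 e.2 := by
  simp only [finset_pair_eq_pair_iff]
  rcases hR with ⟨h, hn⟩ | ⟨h, hn⟩
  · refine ⟨(p, q), ⟨Or.inl ⟨rfl, rfl⟩, h⟩, ?_⟩
    rintro ⟨a, b⟩ ⟨⟨rfl, rfl⟩ | ⟨rfl, rfl⟩, hab⟩
    exacts [rfl, absurd hab hn]
  · refine ⟨(q, p), ⟨Or.inr ⟨rfl, rfl⟩, h⟩, ?_⟩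
    rintro ⟨a, b⟩ ⟨⟨rfl, rfl⟩ | ⟨rfl, rfl⟩, hab⟩
    exacts [absurd hab hn, rfl]

end Patterns

section AffineDependence

/-- An affine dependence among the points of `P`: weights on `P`, not all zero, with `∑ w x = 0`
and `∑ w x • x = 0`. The values of `w` outside `P` are irrelevant. -/
structure IsAffineDependence {𝕜 E : Type*} [Semiring 𝕜] [AddCommMonoid E] [Module 𝕜 E]
    (P : Finset E) (w : E → 𝕜) : Prop where
  sum_eq_zero : ∑ x ∈ P, w x = 0
  sum_smul_eq_zero : ∑ x ∈ P, w x • x = 0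
  exists_ne_zero : ∃ x ∈ P, w x ≠ 0

lemma IsAffineDependence.neg {𝕜 E : Type*} [Ring 𝕜] [AddCommGroup E] [Module 𝕜 E]
    {P : Finset E} {w : E → 𝕜} (h : IsAffineDependence P w) : IsAffineDependence P (-w) where
  sum_eq_zero := by simp [h.sum_eq_zero]
  sum_smul_eq_zero := by simp [h.sum_smul_eq_zero]
  exists_ne_zero := by simpa using h.exists_ne_zero

lemma exists_isAffineDependence {𝕜 E : Type*} [Field 𝕜] [AddCommGroup E] [Module 𝕜 E]
    [FiniteDimensional 𝕜 E] {P : Finset E} (hP : Module.finrank 𝕜 E + 1 < #P) :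
    ∃ w : E → 𝕜, IsAffineDependence P w := by
  obtain ⟨w, hsmul, hsum, hne⟩ :=
    Module.exists_nontrivial_relation_sum_zero_of_finrank_succ_lt_card hP
  exact ⟨w, hsum, hsmul, hne⟩

variable {𝕜 E : Type*} [Field 𝕜] [LinearOrder 𝕜] [IsStrictOrderedRing 𝕜] [AddCommGroup E]
  [Module 𝕜 E] [DecidableEq E] {P : Finset E} {x : E}

lemma IsAffineDependence.mem_convexHull_erase {w : E → 𝕜} (h : IsAffineDependence P w)
    (hx : x ∈ P) (hneg : w x < 0) (hnonneg : ∀ y ∈ P.erase x, 0 ≤ w y) :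
    x ∈ convexHull 𝕜 (P.erase x : Set E) := by
  have hsum : ∑ y ∈ P.erase x, w y + ∑ y ∈ {x}, w y = 0 := by
    rw [sum_singleton, sum_erase_add P w hx, h.sum_eq_zero]
  have hsmul : ∑ y ∈ P.erase x, w y • id y + ∑ y ∈ {x}, w y • id y = 0 := by
    simpa only [sum_singleton, id_eq, sum_erase_add P (fun y ↦ w y • y) hx] using h.sum_smul_eq_zero
  have hpos : 0 < ∑ y ∈ P.erase x, w y := by
    rw [sum_singleton] at hsum
    linarith
  have hcenter : (P.erase x).centerMass w id = x := by
    rw [centerMass_of_sum_add_sum_eq_zero hsum hsmul, centerMass_singleton x id hneg.ne, id_eq]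
  simpa only [hcenter] using centerMass_id_mem_convexHull (P.erase x) hnonneg hpos

lemma exists_isAffineDependence_of_mem_convexHull_erase (hx : x ∈ P)
    (hull : x ∈ convexHull 𝕜 (P.erase x : Set E)) :
    ∃ w : E → 𝕜, IsAffineDependence P w ∧ w x < 0 ∧ ∀ y ∈ P.erase x, 0 ≤ w y := by
  obtain ⟨v, hv, hsum, hcenter⟩ := mem_convexHull'.1 hull
  have hne : ∀ y ∈ P.erase x, Function.update v x (-1) y = v y := fun y hy ↦
    Function.update_of_ne (ne_of_mem_erase hy) _ _
  refine ⟨Function.update v x (-1), ⟨?_, ?_, x, hx, by simp⟩, by simp, fun y hy ↦ ?_⟩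
  · rw [← sum_erase_add P _ hx, sum_congr rfl hne, hsum, Function.update_self, add_neg_cancel]
  · rw [← sum_erase_add P _ hx, sum_congr rfl fun y hy ↦ congrArg (· • y) (hne y hy), hcenter,
      Function.update_self, neg_one_smul, add_neg_cancel]
  · exact (hne y hy).symm ▸ hv y hy

end AffineDependence

section Orientation

variable {S P : Finset Plane} {w : Plane → ℝ} {p q r s : Plane}

lemma det2_swap (p q r : Plane) : det2 q p r = -det2 p q r := by
  simp only [det2]
  ring

lemma collinear_of_det2_eq_zero (hpq : p ≠ q) (h : det2 p q r = 0) :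
    Collinear ℝ ({p, q, r} : Set Plane) := by
  have hnorm : (q.1 - p.1) ^ 2 + (q.2 - p.2) ^ 2 ≠ 0 := fun h0 ↦
    hpq (Prod.ext (by nlinarith [sq_nonneg (q.2 - p.2)]) (by nlinarith [sq_nonneg (q.1 - p.1)]))
  rw [collinear_iff_of_mem (p₀ := p) (by simp)]
  refine ⟨q - p, ?_⟩
  rintro x (rfl | rfl | rfl)
  · exact ⟨0, by simp⟩
  · exact ⟨1, by simp⟩
  -- the coefficient of the orthogonal projection of `x - p` onto `q - p`
  · refine ⟨((x.1 - p.1) * (q.1 - p.1) + (x.2 - p.2) * (q.2 - p.2)) /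
      ((q.1 - p.1) ^ 2 + (q.2 - p.2) ^ 2), ?_⟩
    rw [det2] at h
    ext <;> simp only [vadd_eq_add, Prod.fst_add, Prod.snd_add, Prod.smul_fst, Prod.smul_snd,
      Prod.fst_sub, Prod.snd_sub, smul_eq_mul] <;> field_simp
    · linear_combination -(q.2 - p.2) * h
    · linear_combination (q.1 - p.1) * h

lemma GenPos.mono (hS : GenPos S) (hPS : P ⊆ S) : GenPos P :=
  fun p hp q hq r hr ↦ hS p (hPS hp) q (hPS hq) r (hPS hr)

lemma GenPos.det2_ne_zero (hP : GenPos P) (hp : p ∈ P) (hq : q ∈ P) (hpq : p ≠ q)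
    (hr : r ∈ P \ {p, q}) : det2 p q r ≠ 0 := by
  simp only [mem_sdiff, mem_insert, mem_singleton, not_or] at hr
  exact fun h ↦ hP p hp q hq r hr.1 hpq (Ne.symm hr.2.1) (Ne.symm hr.2.2)
    (collinear_of_det2_eq_zero hpq h)

lemma IsAffineDependence.sum_mul_det2 (h : IsAffineDependence P w) (p q : Plane) :
    ∑ x ∈ P, w x * det2 p q x = 0 := by
  have hfst : ∑ x ∈ P, w x * x.1 = 0 := by
    simpa [Prod.fst_sum] using congrArg Prod.fst h.sum_smul_eq_zero
  have hsnd : ∑ x ∈ P, w x * x.2 = 0 := by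
    simpa [Prod.snd_sum] using congrArg Prod.snd h.sum_smul_eq_zero
  calc ∑ x ∈ P, w x * det2 p q x
      = ∑ x ∈ P, ((q.1 - p.1) * (w x * x.2) - (q.2 - p.2) * (w x * x.1) +
          ((q.2 - p.2) * p.1 - (q.1 - p.1) * p.2) * w x) :=
        sum_congr rfl fun x _ ↦ by simp only [det2]; ring
    _ = 0 := by
        rw [sum_add_distrib, sum_sub_distrib, ← mul_sum, ← mul_sum, ← mul_sum, hfst, hsnd,
          h.sum_eq_zero]
        ring

lemma IsAffineDependence.mul_det2_add_mul_det2 (h : IsAffineDependence P w) (hrs : r ≠ s)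
    (hP : P \ {p, q} = {r, s}) : w r * det2 p q r + w s * det2 p q s = 0 := by
  rw [← sum_pair (f := fun x ↦ w x * det2 p q x) hrs, ← hP, ← h.sum_mul_det2 p q]
  refine sum_subset sdiff_subset fun x hx hxpq ↦ ?_
  obtain rfl | rfl : x = p ∨ x = q := by simpa [hx, or_iff_not_imp_left] using hxpq
  all_goals simp [det2, mul_comm]

lemma IsAffineDependence.ne_zero (h : IsAffineDependence P w) (hP : #P = 4) (hgp : GenPos P) :
    ∀ x ∈ P, w x ≠ 0 := by
  intro x hx hwx
  obtain ⟨y, hy, hwy⟩ := h.exists_ne_zero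
  have hxy : x ≠ y := by rintro rfl; exact hwy hwx
  obtain ⟨p, hp, q, hq, hpq, -, hPpq⟩ := exists_sdiff_pair_eq_pair hP hx hy hxy
  have hrel := h.mul_det2_add_mul_det2 hxy hPpq
  rw [hwx, zero_mul, zero_add] at hrel
  exact mul_ne_zero hwy (hgp.det2_ne_zero hp hq hpq (by simp [hPpq])) hrel

lemma IsAffineDependence.det2_mul_det2_pos_iff (h : IsAffineDependence P w) (hP : #P = 4)
    (hgp : GenPos P) (hp : p ∈ P) (hq : q ∈ P) (hpq : p ≠ q) (hrs : r ≠ s)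
    (hPpq : P \ {p, q} = {r, s}) : 0 < det2 p q r * det2 p q s ↔ w r * w s < 0 := by
  have hs : s ∈ P \ {p, q} := by simp [hPpq]
  have hws : w s ≠ 0 := h.ne_zero hP hgp s (mem_sdiff.1 hs).1
  have hds : det2 p q s ≠ 0 := hgp.det2_ne_zero hp hq hpq hs
  have hrel : (w r * w s) * (det2 p q r * det2 p q s) = -(w s * det2 p q s) ^ 2 := by
    linear_combination (w s * det2 p q s) * h.mul_det2_add_mul_det2 hrs hPpq
  have hprod : (w r * w s) * (det2 p q r * det2 p q s) < 0 := by
    rw [hrel, neg_lt_zero]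
    positivity
  rw [mul_neg_iff] at hprod
  constructor <;> intro _ <;> rcases hprod with hprod | hprod <;> linarith [hprod.1, hprod.2]

end Orientation

section HullEdges

variable {P : Finset Plane} {w : Plane → ℝ}

open Classical in
/-- The counterclockwise edges of the convex hull of `P`: the ordered pairs `(p, q)` of distinct
points of `P` such that all other points of `P` lie strictly to the left of the directed line from
`p` to `q`. For four points these are exactly the type-A patterns. -/
noncomputable def hullEdges (P : Finset Plane) : Finset (Plane × Plane) :=
  P.offDiag.filter fun e ↦ ∀ x ∈ P \ {e.1, e.2}, LeftOf e.1 e.2 x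

open Classical in
lemma card_hullEdges_eq_sum (P : Finset Plane) :
    #(hullEdges P) =
      ∑ p ∈ P, ∑ q ∈ P.erase p, if ∀ x ∈ P \ {p, q}, LeftOf p q x then 1 else 0 := by
  rw [hullEdges, card_filter]
  exact sum_finset_product P.offDiag P (fun p ↦ P.erase p) (fun e ↦ by
    rw [mem_offDiag, mem_erase, ne_comm, and_comm (a := e.2 ∈ P)])

lemma patACount_eq_sum_card_hullEdges (S : Finset Plane) :
    patACount S = ∑ P ∈ S.powersetCard 4, #(hullEdges P) := by
  classical
  simp only [patACount, card_filter, card_hullEdges_eq_sum]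
  exact sum_powersetCard_sdiff_pair S 2 fun p q e ↦ if ∀ x ∈ e, LeftOf p q x then 1 else 0

lemma patACount_add_patBCount (S : Finset Plane) :
    patACount S + patBCount S = 12 * #(S.powersetCard 4) := by
  have hpairs : ∀ P ∈ S.powersetCard 4, ∑ p ∈ P, ∑ _q ∈ P.erase p, 1 = 12 := by
    intro P hP
    have herase : ∀ p ∈ P, ∑ _q ∈ P.erase p, 1 = 3 := fun p hp ↦ by
      rw [← card_eq_sum_ones, card_erase_of_mem hp, (mem_powersetCard.1 hP).2]
    rw [sum_congr rfl herase, sum_const, (mem_powersetCard.1 hP).2, smul_eq_mul]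
  simp only [patACount, patBCount, ← sum_add_distrib, card_filter_add_card_filter_not]
  simp only [card_eq_sum_ones (powersetCard 2 _)]
  rw [sum_powersetCard_sdiff_pair S 2 fun _ _ _ ↦ 1, sum_congr rfl hpairs, sum_const, smul_eq_mul,
    mul_comm]

lemma IsAffineDependence.existsUnique_pos_neg_pair (h : IsAffineDependence P w) (hP : #P = 4)
    (hgp : GenPos P) {e : Plane × Plane} (he : e ∈ hullEdges P) :
    ∃! f, f ∈ {x ∈ P | 0 < w x} ×ˢ {x ∈ P | w x < 0} ∧ P \ {e.1, e.2} = {f.1, f.2} := by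
  obtain ⟨p, q⟩ := e
  simp only [hullEdges, mem_filter, mem_offDiag] at he
  obtain ⟨⟨hp, hq, hpq⟩, hleft⟩ := he
  obtain ⟨r, hr, s, hs, hrs, hPpq, -⟩ := exists_sdiff_pair_eq_pair hP hp hq hpq
  have hsame : 0 < det2 p q r * det2 p q s :=
    mul_pos (hleft r (by simp [hPpq])) (hleft s (by simp [hPpq]))
  have hxor : Xor (0 < w r ∧ w s < 0) (0 < w s ∧ w r < 0) := by
    rcases mul_neg_iff.1 ((h.det2_mul_det2_pos_iff hP hgp hp hq hpq hrs hPpq).1 hsame) with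
      ⟨hwr, hws⟩ | ⟨hwr, hws⟩
    · exact Or.inl ⟨⟨hwr, hws⟩, fun hsr' ↦ hws.not_gt hsr'.1⟩
    · exact Or.inr ⟨⟨hws, hwr⟩, fun hrs' ↦ hwr.not_gt hrs'.1⟩
  refine (existsUnique_congr fun f ↦ ?_).1
    (existsUnique_pair_of_xor (R := fun x y ↦ 0 < w x ∧ w y < 0) hxor)
  rw [hPpq, eq_comm (b := {f.1, f.2}), and_comm]
  refine and_congr_left fun hf ↦ ?_
  rcases finset_pair_eq_pair_iff.1 hf with ⟨h1, h2⟩ | ⟨h1, h2⟩ <;>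
    simp only [mem_product, mem_filter, h1, h2, hr, hs, true_and]

lemma IsAffineDependence.existsUnique_hullEdge (h : IsAffineDependence P w) (hP : #P = 4)
    (hgp : GenPos P) {f : Plane × Plane} (hf : f ∈ {x ∈ P | 0 < w x} ×ˢ {x ∈ P | w x < 0}) :
    ∃! e, e ∈ hullEdges P ∧ P \ {e.1, e.2} = {f.1, f.2} := by
  obtain ⟨r, s⟩ := f
  simp only [mem_product, mem_filter] at hf
  obtain ⟨⟨hr, hwr⟩, hs, hws⟩ := hf
  have hrs : r ≠ s := fun hrs ↦ hws.not_gt (hrs ▸ hwr)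
  obtain ⟨p, hp, q, hq, hpq, hPrs, hPpq⟩ := exists_sdiff_pair_eq_pair hP hr hs hrs
  have hxor : Xor (LeftOf p q r ∧ LeftOf p q s) (LeftOf q p r ∧ LeftOf q p s) := by
    simp only [LeftOf, det2_swap p q, neg_pos]
    rcases mul_pos_iff.1 ((h.det2_mul_det2_pos_iff hP hgp hp hq hpq hrs hPpq).2
      (mul_neg_of_pos_of_neg hwr hws)) with hside | hside
    · exact Or.inl ⟨hside, fun hside' ↦ hside.1.not_gt hside'.1⟩
    · exact Or.inr ⟨hside, fun hside' ↦ hside.1.not_gt hside'.1⟩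
  refine (existsUnique_congr fun e ↦ ?_).1
    (existsUnique_pair_of_xor (R := fun x y ↦ LeftOf x y r ∧ LeftOf x y s) hxor)
  simp only [hullEdges, mem_filter, mem_offDiag]
  constructor
  · rintro ⟨hpair, hleft⟩
    have hoff : e.1 ∈ P ∧ e.2 ∈ P ∧ e.1 ≠ e.2 := by
      rcases finset_pair_eq_pair_iff.1 hpair with ⟨h1, h2⟩ | ⟨h1, h2⟩ <;> rw [h1, h2]
      exacts [⟨hp, hq, hpq⟩, ⟨hq, hp, hpq.symm⟩]
    rw [hpair, hPpq]
    exact ⟨⟨hoff, by simpa using hleft⟩, rfl⟩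
  · rintro ⟨⟨⟨h1, h2, -⟩, hleft⟩, hcompl⟩
    have hsub : {e.1, e.2} ⊆ P := insert_subset h1 (singleton_subset_iff.2 h2)
    rw [hcompl] at hleft
    exact ⟨by rw [← hPrs, ← hcompl, Finset.sdiff_sdiff_eq_self hsub], by simpa using hleft⟩

lemma IsAffineDependence.card_hullEdges (h : IsAffineDependence P w) (hP : #P = 4)
    (hgp : GenPos P) : #(hullEdges P) = #{x ∈ P | 0 < w x} * #{x ∈ P | w x < 0} := by
  have hcard := card_mul_eq_card_mul (m := 1) (n := 1) (s := hullEdges P)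
    (t := {x ∈ P | 0 < w x} ×ˢ {x ∈ P | w x < 0})
    (fun e f : Plane × Plane ↦ P \ {e.1, e.2} = {f.1, f.2})
    (fun e he ↦ card_eq_one_iff_existsUnique.2 <| by
      simpa only [mem_bipartiteAbove] using h.existsUnique_pos_neg_pair hP hgp he)
    (fun f hf ↦ card_eq_one_iff_existsUnique.2 <| by
      simpa only [mem_bipartiteBelow] using h.existsUnique_hullEdge hP hgp hf)
  simpa only [mul_one, card_product] using hcard

lemma IsAffineDependence.card_pos_add_card_neg (h : IsAffineDependence P w) (hP : #P = 4)
    (hgp : GenPos P) : #{x ∈ P | 0 < w x} + #{x ∈ P | w x < 0} = 4 := by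
  have hneg : {x ∈ P | w x < 0} = {x ∈ P | ¬ 0 < w x} := filter_congr fun x hx ↦
    ⟨fun hx0 ↦ hx0.not_gt, fun hx0 ↦ (not_lt.1 hx0).lt_of_ne (h.ne_zero hP hgp x hx)⟩
  rw [hneg, card_filter_add_card_filter_not, hP]

lemma ConvexPos.one_lt_card_pos (hconv : ConvexPos P) (h : IsAffineDependence P w) :
    1 < #{x ∈ P | 0 < w x} := by
  obtain ⟨x, hx, hpos⟩ := exists_pos_of_sum_zero_of_exists_nonzero w h.sum_eq_zero h.exists_ne_zero
  by_contra! hcard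
  refine hconv x hx (h.neg.mem_convexHull_erase hx (neg_neg_of_pos hpos) fun y hy ↦ ?_)
  by_contra! hy0
  exact ne_of_mem_erase hy (card_le_one.1 hcard y (mem_filter.2 ⟨mem_of_mem_erase hy,
    neg_lt_zero.1 hy0⟩) x (mem_filter.2 ⟨hx, hpos⟩))

lemma ConvexPos.one_lt_card_neg (hconv : ConvexPos P) (h : IsAffineDependence P w) :
    1 < #{x ∈ P | w x < 0} := by
  simpa only [Pi.neg_apply, neg_pos] using hconv.one_lt_card_pos h.neg

lemma ConvexPos.card_hullEdges (hconv : ConvexPos P) (hP : #P = 4) (hgp : GenPos P) :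
    #(hullEdges P) = 4 := by
  obtain ⟨w, h⟩ := exists_isAffineDependence (𝕜 := ℝ) (P := P) (by simp [hP])
  have hsum := h.card_pos_add_card_neg hP hgp
  have hpos := hconv.one_lt_card_pos h
  have hneg := hconv.one_lt_card_neg h
  rw [h.card_hullEdges hP hgp, show #{x ∈ P | 0 < w x} = 2 by lia,
    show #{x ∈ P | w x < 0} = 2 by lia]

lemma card_hullEdges_of_not_convexPos (hconv : ¬ ConvexPos P) (hP : #P = 4) (hgp : GenPos P) :
    #(hullEdges P) = 3 := by
  simp only [ConvexPos, not_forall, not_not] at hconv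
  obtain ⟨x, hx, hull⟩ := hconv
  obtain ⟨w, h, hwx, hw⟩ := exists_isAffineDependence_of_mem_convexHull_erase hx hull
  have hneg : {y ∈ P | w y < 0} = {x} := by
    ext y
    rw [mem_filter, mem_singleton]
    refine ⟨fun ⟨hy, hy0⟩ ↦ ?_, fun hyx ↦ hyx ▸ ⟨hx, hwx⟩⟩
    by_contra hyx
    exact hy0.not_ge (hw y (mem_erase.2 ⟨hyx, hy⟩))
  have hsum := h.card_pos_add_card_neg hP hgp
  rw [hneg, card_singleton] at hsum
  rw [h.card_hullEdges hP hgp, hneg, card_singleton, show #{x ∈ P | 0 < w x} = 3 by lia]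

end HullEdges

theorem stmt4 (S : Finset Plane) (hgp : GenPos S) :
    patACount S = 4 * squareCount S + 3 * triCount S ∧
    patBCount S = 8 * squareCount S + 9 * triCount S := by
  classical
  have hedges : ∀ P ∈ S.powersetCard 4, #(hullEdges P) = if ConvexPos P then 4 else 3 := by
    intro P hP
    obtain ⟨hPS, hcard⟩ := mem_powersetCard.1 hP
    split_ifs with hconv
    · exact hconv.card_hullEdges hcard (hgp.mono hPS)
    · exact card_hullEdges_of_not_convexPos hconv hcard (hgp.mono hPS)
  have hA : patACount S = 4 * squareCount S + 3 * triCount S := by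
    rw [patACount_eq_sum_card_hullEdges, sum_congr rfl hedges, sum_ite, sum_const, sum_const,
      smul_eq_mul, smul_eq_mul, mul_comm, mul_comm _ 3]
    rfl
  have hcount : squareCount S + triCount S = #(S.powersetCard 4) :=
    card_filter_add_card_filter_not _
  have hAB := patACount_add_patBCount S
  exact ⟨hA, by lia⟩
end

section
/- Let S be a finite set of points in the plane in general position, let p ∈ S, and let q ∈ S ∖ {p}. Then, as integers, Σ_{r∈S∖{p}} ( C(λ_{S∖{p}}(q,r), 2) − C(λ_S(q,r), 2) ) = Σ_{r ∈ S, r strictly to the left of the directed line from p to q} (1 − λ_S(q,r)). -/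
open Finset

/-!
Deleting `p` changes `lam S q r` only when `p` lies to the left of `q → r`, and then lowers it by
exactly one. By cyclic invariance of the determinant this happens precisely when `r` lies to the
left of `p → q`, and there `C(n, 2) - C(n + 1, 2) = -n = 1 - (n + 1)`, where `n + 1 = lam S q r`.
-/

theorem det2_rotate (p q r : Plane) : det2 q r p = det2 p q r := by
  unfold det2
  ring

theorem leftOf_rotate {p q r : Plane} : LeftOf q r p ↔ LeftOf p q r := by
  rw [LeftOf, LeftOf, det2_rotate]

theorem not_leftOf_left (p q : Plane) : ¬ LeftOf p q p := by
  simp [LeftOf, det2]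

open Classical in
theorem lam_eq_card_filter (S : Finset Plane) (p q : Plane) :
    lam S p q = (S.filter fun r => LeftOf p q r).card := by
  rcases eq_or_ne p q with rfl | hpq
  · simp [lam, LeftOf, det2]
  · exact if_neg hpq

theorem lam_erase_add_one {S : Finset Plane} {p q r : Plane} (hp : p ∈ S) (h : LeftOf q r p) :
    lam (S.erase p) q r + 1 = lam S q r := by
  classical
  rw [lam_eq_card_filter, lam_eq_card_filter, filter_erase]
  exact card_erase_add_one (mem_filter.mpr ⟨hp, h⟩)

theorem lam_erase_of_not_leftOf (S : Finset Plane) {p q r : Plane} (h : ¬ LeftOf q r p) :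
    lam (S.erase p) q r = lam S q r := by
  classical
  rw [lam_eq_card_filter, lam_eq_card_filter, filter_erase,
    erase_eq_of_notMem fun hp => h (mem_filter.mp hp).2]

open Classical in
theorem filter_leftOf_erase (S : Finset Plane) (p q : Plane) :
    ((S.erase p).filter fun r => LeftOf p q r) = S.filter fun r => LeftOf p q r := by
  rw [filter_erase, erase_eq_of_notMem fun hp => not_leftOf_left p q (mem_filter.mp hp).2]

open Classical in
theorem sum_lam_erase_sub_lam {M : Type*} [AddCommGroup M] (f : ℕ → M) (S : Finset Plane)
    (p q : Plane) :
    ∑ r ∈ S.erase p, (f (lam (S.erase p) q r) - f (lam S q r)) =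
      ∑ r ∈ S.filter (fun r => LeftOf p q r), (f (lam (S.erase p) q r) - f (lam S q r)) := by
  rw [← filter_leftOf_erase]
  refine (sum_filter_of_ne fun r _ hne => ?_).symm
  by_contra hr
  exact hne (by rw [lam_erase_of_not_leftOf S (leftOf_rotate.not.mpr hr), sub_self])

open Classical in
theorem stmt12_general (S : Finset Plane) (p : Plane) (hp : p ∈ S) (q : Plane) :
    ∑ r ∈ S.erase p,
        ((Nat.choose (lam (S.erase p) q r) 2 : ℤ) - (Nat.choose (lam S q r) 2 : ℤ)) =
      ∑ r ∈ S.filter (fun r => LeftOf p q r), (1 - (lam S q r : ℤ)) := by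
  rw [sum_lam_erase_sub_lam (fun n => (n.choose 2 : ℤ))]
  refine sum_congr rfl fun r hr => ?_
  have hlam : lam (S.erase p) q r + 1 = lam S q r :=
    lam_erase_add_one hp (leftOf_rotate.mpr (mem_filter.mp hr).2)
  rw [← hlam, Nat.choose_succ_succ' _ 1, Nat.choose_one_right]
  push_cast
  ring

open Classical in
theorem stmt12 (S : Finset Plane) (hgp : GenPos S) (p : Plane) (hp : p ∈ S)
    (q : Plane) (hq : q ∈ S.erase p) :
    ∑ r ∈ S.erase p,
        ((Nat.choose (lam (S.erase p) q r) 2 : ℤ) - (Nat.choose (lam S q r) 2 : ℤ)) =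
      ∑ r ∈ S.filter (fun r => LeftOf p q r), (1 - (lam S q r : ℤ)) :=
  stmt12_general S p hp q
end

section
/- Let S be a set of n points in the plane in general position and let p be a point not in S such that S ∪ {p} is in general position. Then, as integers, cr(S ∪ {p}) = cr(S) + f_{S∪{p}}({p}, S) + f_{S∪{p}}(S, {p}) + Σ_{q∈S} Σ_{r ∈ S, r strictly to the left of the directed line from p to q} λ_S(q,r) − n(n−1)(n−2)/2. -/
open Finset

/-- `fS S P Q = ∑_{p ∈ P} ∑_{q ∈ Q} C(lam S p q, 2)`. -/
noncomputable def fS (S P Q : Finset Plane) : ℕ :=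
  ∑ p ∈ P, ∑ q ∈ Q, Nat.choose (lam S p q) 2

/-!
Write the right-hand side without `cr(S)` and the cubic term as `insertionCount S p`. Each of its
three sums counts configurations formed by `p` and three points of `S`, so it is the sum of its
values on the triples of `S`; the new convex quadrilaterals are also indexed by triples. It
therefore suffices to show that a triple `{a, b, c}` contributes `3`, plus one if `p, a, b, c` are
in convex position. By Radon's theorem they are if and only if exactly two of the coefficients in
the affine dependency `det(a,b,c) p - det(p,b,c) a - det(p,c,a) b - det(p,a,b) c = 0` are positive,
so the orientations of the four triples determine both counts, and finitely many sign patterns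
remain.
-/

section PowersetCard

variable {α M : Type*} [AddCommMonoid M]

lemma card_filter_powersetCard_succ_insert [DecidableEq α] {S : Finset α} {p : α} (hp : p ∉ S)
    (k : ℕ) (A : Finset α → Prop) [DecidablePred A] :
    #{Q ∈ (insert p S).powersetCard (k + 1) | A Q} =
      #{Q ∈ S.powersetCard (k + 1) | A Q} + #{Q ∈ S.powersetCard k | A (insert p Q)} := by
  have hnotMem {j : ℕ} {Q : Finset α} (hQ : Q ∈ S.powersetCard j) : p ∉ Q :=
    fun h => hp ((mem_powersetCard.mp hQ).1 h)
  have hdisj : Disjoint (S.powersetCard (k + 1)) ((S.powersetCard k).image (insert p)) := by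
    rw [disjoint_left]
    intro Q hQ hQ'
    obtain ⟨R, -, rfl⟩ := mem_image.mp hQ'
    exact hnotMem hQ (mem_insert_self p R)
  have hinj : Set.InjOn (insert p) {Q | Q ∈ S.powersetCard k ∧ A (insert p Q)} :=
    fun Q hQ R hR h => by rw [← erase_insert (hnotMem hQ.1), h, erase_insert (hnotMem hR.1)]
  rw [powersetCard_succ_insert hp, filter_union,
    card_union_of_disjoint (disjoint_filter_filter hdisj), filter_image,
    card_image_of_injOn (by simpa only [coe_filter] using hinj)]

lemma sum_powersetCard_succ_sum_erase [DecidableEq α] (S : Finset α) (k : ℕ)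
    (f : α → Finset α → M) :
    ∑ P ∈ S.powersetCard (k + 1), ∑ a ∈ P, f a (P.erase a) =
      ∑ a ∈ S, ∑ Q ∈ (S.erase a).powersetCard k, f a Q := by
  rw [sum_sigma', sum_sigma']
  refine sum_nbij' (fun x => ⟨x.2, x.1.erase x.2⟩) (fun y => ⟨insert y.1 y.2, y.1⟩) ?_ ?_ ?_ ?_ ?_
  · rintro ⟨P, a⟩ h
    simp only [mem_sigma, mem_powersetCard] at h ⊢
    obtain ⟨⟨hPS, hcard⟩, ha⟩ := h
    exact ⟨hPS ha, erase_subset_erase a hPS,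
      by rw [card_erase_of_mem ha, hcard, Nat.add_sub_cancel]⟩
  · rintro ⟨a, Q⟩ h
    simp only [mem_sigma, mem_powersetCard, subset_erase] at h ⊢
    obtain ⟨ha, ⟨hQS, haQ⟩, hcard⟩ := h
    exact ⟨⟨insert_subset ha hQS, by rw [card_insert_of_notMem haQ, hcard]⟩, mem_insert_self a Q⟩
  · rintro ⟨P, a⟩ h
    simp [insert_erase (mem_sigma.mp h).2]
  · rintro ⟨a, Q⟩ h
    simp only [mem_sigma, mem_powersetCard, subset_erase] at h
    simp [erase_insert h.2.1.2]
  · exact fun _ _ => rfl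

lemma choose_card_filter_eq_sum_powersetCard (S : Finset α) (k : ℕ) (R : α → Prop)
    [DecidablePred R] :
    (#{a ∈ S | R a}).choose k = ∑ Q ∈ S.powersetCard k, (#{a ∈ Q | R a}).choose k := by
  have hpowerset : powersetCard k {a ∈ S | R a} = {Q ∈ S.powersetCard k | ∀ a ∈ Q, R a} := by
    ext Q
    simp only [mem_powersetCard, mem_filter, subset_iff]
    grind
  rw [← card_powersetCard, hpowerset, card_filter]
  refine sum_congr rfl fun Q hQ => ?_
  have hcard : #Q = k := (mem_powersetCard.mp hQ).2
  split_ifs with hR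
  · rw [filter_true_of_mem hR, hcard, Nat.choose_self]
  · have hlt : #{a ∈ Q | R a} < k :=
      hcard ▸ card_lt_card (filter_ssubset.mpr (by simpa using hR))
    exact (Nat.choose_eq_zero_of_lt hlt).symm

lemma sum_choose_card_filter (S : Finset α) (k : ℕ) (R : α → α → Prop)
    [∀ a, DecidablePred (R a)] (hR : ∀ a, ¬ R a a) :
    ∑ a ∈ S, (#{b ∈ S | R a b}).choose k =
      ∑ P ∈ S.powersetCard (k + 1), ∑ a ∈ P, (#{b ∈ P | R a b}).choose k := by
  classical
  have herase (T : Finset α) (a : α) : {b ∈ T.erase a | R a b} = {b ∈ T | R a b} := by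
    rw [filter_erase, erase_eq_of_notMem (by simp [hR])]
  have h := sum_powersetCard_succ_sum_erase S k fun a Q => (#{b ∈ Q | R a b}).choose k
  simp only [herase, ← choose_card_filter_eq_sum_powersetCard] at h
  exact h.symm

lemma sum_sum_eq_sum_powersetCard (S : Finset α) (f : α → α → M) (hf : ∀ a, f a a = 0) :
    ∑ a ∈ S, ∑ b ∈ S, f a b = ∑ P ∈ S.powersetCard 2, ∑ a ∈ P, ∑ b ∈ P, f a b := by
  classical
  have herase (T : Finset α) (a : α) : ∑ b ∈ T.erase a, f a b = ∑ b ∈ T, f a b :=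
    sum_erase T (hf a)
  have h := sum_powersetCard_succ_sum_erase S 1 fun a Q => ∑ b ∈ Q, f a b
  simpa only [powersetCard_one, sum_map, Function.Embedding.coeFn_mk, sum_singleton, herase]
    using h.symm

lemma sum_sum_sum_eq_sum_powersetCard (S : Finset α) (f : α → α → α → M)
    (hab : ∀ a c, f a a c = 0) (hac : ∀ a b, f a b a = 0) (hbc : ∀ a b, f a b b = 0) :
    ∑ a ∈ S, ∑ b ∈ S, ∑ c ∈ S, f a b c =
      ∑ P ∈ S.powersetCard 3, ∑ a ∈ P, ∑ b ∈ P, ∑ c ∈ P, f a b c := by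
  classical
  have herase (T : Finset α) (a : α) :
      ∑ b ∈ T.erase a, ∑ c ∈ T.erase a, f a b c = ∑ b ∈ T, ∑ c ∈ T, f a b c := by
    simp only [sum_erase T (hac a _)]
    exact sum_erase T (sum_eq_zero fun c _ => hab a c)
  have h := sum_powersetCard_succ_sum_erase S 2 fun a Q => ∑ b ∈ Q, ∑ c ∈ Q, f a b c
  simp only [← sum_sum_eq_sum_powersetCard _ (f _) (hbc _), herase] at h
  exact h.symm

end PowersetCard

lemma mul_sub_one_mul_sub_two_eq_six_mul_choose (n : ℕ) :
    (n : ℤ) * ((n : ℤ) - 1) * ((n : ℤ) - 2) = 6 * n.choose 3 := by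
  have h := congrArg (Nat.cast : ℕ → ℤ) (Nat.descFactorial_eq_factorial_mul_choose n 3)
  rw [← descPochhammer_eval_eq_descFactorial] at h
  simpa [descPochhammer_succ_right, Nat.factorial] using h

section Orientation

variable {p a b c : Plane}

lemma det2_rotate_left (a b c : Plane) : det2 b c a = det2 a b c := by unfold det2; ring

lemma det2_rotate_right (a b c : Plane) : det2 c a b = det2 a b c := by unfold det2; ring

lemma det2_swap_s16 (a b c : Plane) : det2 a c b = -det2 a b c := by unfold det2; ring

@[simp]
lemma det2_self_left (a b : Plane) : det2 a a b = 0 := by simp [det2]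

@[simp]
lemma det2_self_right (a b : Plane) : det2 a b b = 0 := by unfold det2; ring

@[simp]
lemma det2_self_outer (a b : Plane) : det2 a b a = 0 := by simp [det2]

lemma det2_eq_add_add (p a b c : Plane) :
    det2 a b c = det2 p a b + det2 p b c + det2 p c a := by
  unfold det2; ring

lemma det2_smul_eq_add_add (p a b c : Plane) :
    det2 a b c • p = det2 p b c • a + det2 p c a • b + det2 p a b • c := by
  ext <;>
  simp only [det2, Prod.smul_fst, Prod.smul_snd, Prod.fst_add, Prod.snd_add, smul_eq_mul] <;>
  ring

lemma det2_affineCombination_left (a b c y z : Plane) {α β γ : ℝ} (h : α + β + γ = 1) :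
    det2 (α • a + β • b + γ • c) y z = α * det2 a y z + β * det2 b y z + γ * det2 c y z := by
  obtain rfl : α = 1 - β - γ := by linarith
  simp only [det2, Prod.smul_fst, Prod.smul_snd, Prod.fst_add, Prod.snd_add, smul_eq_mul]
  ring

lemma pairwise_ne_of_det2_ne_zero (h : det2 a b c ≠ 0) : a ≠ b ∧ a ≠ c ∧ b ≠ c := by
  refine ⟨?_, ?_, ?_⟩ <;> rintro rfl <;> simp at h

lemma collinear_of_det2_eq_zero_s16 (h : det2 a b c = 0) : Collinear ℝ ({a, b, c} : Set Plane) := by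
  obtain rfl | hab := eq_or_ne a b
  · simpa using collinear_pair ℝ a c
  have hnorm : (b.1 - a.1) ^ 2 + (b.2 - a.2) ^ 2 ≠ 0 := by
    contrapose! hab
    ext <;> nlinarith [sq_nonneg (b.1 - a.1), sq_nonneg (b.2 - a.2)]
  -- The coefficient is that of the orthogonal projection of `c - a` onto `b - a`.
  have hc : c = (((b.1 - a.1) * (c.1 - a.1) + (b.2 - a.2) * (c.2 - a.2)) /
      ((b.1 - a.1) ^ 2 + (b.2 - a.2) ^ 2)) • (b - a) + a := by
    unfold det2 at h
    ext <;>
    simp only [Prod.fst_add, Prod.snd_add, Prod.smul_fst, Prod.smul_snd, Prod.fst_sub,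
      Prod.snd_sub, smul_eq_mul] <;>
    field_simp
    · linear_combination (-(b.2 - a.2)) * h
    · linear_combination (b.1 - a.1) * h
  rw [collinear_iff_of_mem (p₀ := a) (by simp)]
  refine ⟨b - a, ?_⟩
  rintro x (rfl | rfl | rfl)
  · exact ⟨0, by simp⟩
  · exact ⟨1, by simp⟩
  · exact ⟨_, hc⟩

lemma GenPos.det2_ne_zero_s16 {S : Finset Plane} (hS : GenPos S) (ha : a ∈ S) (hb : b ∈ S)
    (hc : c ∈ S) (hab : a ≠ b) (hac : a ≠ c) (hbc : b ≠ c) : det2 a b c ≠ 0 :=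
  fun h => hS a ha b hb c hc hab hac hbc (collinear_of_det2_eq_zero_s16 h)

end Orientation

section ConvexPosition

variable {p a b c : Plane}

lemma mem_convexHull_triple_iff :
    p ∈ convexHull ℝ ({a, b, c} : Set Plane) ↔
      ∃ α β γ : ℝ, 0 ≤ α ∧ 0 ≤ β ∧ 0 ≤ γ ∧ α + β + γ = 1 ∧ α • a + β • b + γ • c = p := by
  constructor
  · rw [convexHull_insert (Set.insert_nonempty _ _), convexHull_pair, convexJoin_singleton_left]
    simp only [Set.mem_iUnion]
    rintro ⟨y, ⟨s, t, hs, ht, hst, rfl⟩, u, v, hu, hv, huv, rfl⟩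
    refine ⟨u, v * s, v * t, hu, mul_nonneg hv hs, mul_nonneg hv ht, ?_, by module⟩
    linear_combination v * hst + huv
  · rintro ⟨α, β, γ, hα, hβ, hγ, hsum, rfl⟩
    refine mem_convexHull_of_exists_fintype ![α, β, γ] ![a, b, c] ?_ ?_ ?_ ?_
    · simp [Fin.forall_fin_succ, hα, hβ, hγ]
    · simpa [Fin.sum_univ_three] using hsum
    · simp [Fin.forall_fin_succ]
    · simp [Fin.sum_univ_three]

lemma mem_convexHull_triple_iff_det2 (h : det2 a b c ≠ 0) :
    p ∈ convexHull ℝ ({a, b, c} : Set Plane) ↔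
      0 ≤ det2 p b c / det2 a b c ∧ 0 ≤ det2 p c a / det2 a b c ∧
        0 ≤ det2 p a b / det2 a b c := by
  rw [mem_convexHull_triple_iff]
  constructor
  · rintro ⟨α, β, γ, hα, hβ, hγ, hsum, rfl⟩
    simp only [det2_affineCombination_left a b c _ _ hsum, det2_self_left, det2_self_outer,
      mul_zero, add_zero, zero_add, det2_rotate_left a b c, det2_rotate_right a b c,
      mul_div_cancel_right₀ _ h]
    exact ⟨hα, hβ, hγ⟩
  · rintro ⟨hα, hβ, hγ⟩
    refine ⟨_, _, _, hα, hβ, hγ, ?_, ?_⟩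
    · field_simp
      rw [det2_eq_add_add p a b c]
      ring
    · rw [← smul_right_inj h, det2_smul_eq_add_add p a b c]
      simp only [smul_add, smul_smul, mul_div_cancel₀ _ h]

lemma convexPos_quadruple_iff (hpa : p ≠ a) (hpb : p ≠ b) (hpc : p ≠ c) (hab : a ≠ b)
    (hac : a ≠ c) (hbc : b ≠ c) :
    ConvexPos {p, a, b, c} ↔
      p ∉ convexHull ℝ ({a, b, c} : Set Plane) ∧ a ∉ convexHull ℝ ({p, b, c} : Set Plane) ∧
        b ∉ convexHull ℝ ({p, a, c} : Set Plane) ∧ c ∉ convexHull ℝ ({p, a, b} : Set Plane) := by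
  simp [ConvexPos, *, Set.insert_sdiff_of_notMem]

lemma convexPos_iff_det2_mul_neg (habc : det2 a b c ≠ 0)
    (hpab : det2 p a b ≠ 0) (hpbc : det2 p b c ≠ 0) (hpca : det2 p c a ≠ 0) :
    ConvexPos {p, a, b, c} ↔ det2 a b c * det2 p a b * det2 p b c * det2 p c a < 0 := by
  have hadd := det2_eq_add_add p a b c
  have hpac : det2 p a c ≠ 0 := by rwa [det2_swap_s16, neg_ne_zero]
  obtain ⟨hpa, hpb, hab⟩ := pairwise_ne_of_det2_ne_zero hpab
  obtain ⟨-, hpc, hbc⟩ := pairwise_ne_of_det2_ne_zero hpbc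
  obtain ⟨-, hac, -⟩ := pairwise_ne_of_det2_ne_zero habc
  rw [convexPos_quadruple_iff hpa hpb hpc hab hac hbc, mem_convexHull_triple_iff_det2 habc,
    mem_convexHull_triple_iff_det2 hpbc, mem_convexHull_triple_iff_det2 hpac,
    mem_convexHull_triple_iff_det2 hpab]
  simp only [det2_rotate_left p, det2_rotate_right p, det2_rotate_right a b c,
    det2_rotate_right a c b, det2_swap_s16 p a b, det2_swap_s16 p b c, det2_swap_s16 p c a, det2_swap_s16 a b c]
  -- The identity `hadd` excludes the two sign patterns in which all three summands have the
  -- sign opposite to their sum.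
  rcases habc.lt_or_gt with h₀ | h₀ <;> rcases hpab.lt_or_gt with h₁ | h₁ <;>
  rcases hpbc.lt_or_gt with h₂ | h₂ <;> rcases hpca.lt_or_gt with h₃ | h₃ <;>
  first
  | (exfalso; linarith)
  | simp [mul_neg_iff, mul_pos_iff, div_nonneg_iff, h₀, h₁, h₂, h₃, h₀.le, h₁.le, h₂.le, h₃.le,
      h₀.not_ge, h₁.not_ge, h₂.not_ge, h₃.not_ge, h₀.not_gt, h₁.not_gt, h₂.not_gt, h₃.not_gt]

end ConvexPosition

section Counting

variable {p a b c : Plane}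

open Classical in
lemma lam_eq_card (S : Finset Plane) (p q : Plane) : lam S p q = #{r ∈ S | LeftOf p q r} := by
  unfold lam
  split_ifs with h
  · simp [h, LeftOf]
  · rfl

lemma lam_insert_left (S : Finset Plane) (p q : Plane) : lam (insert p S) p q = lam S p q := by
  rw [lam_eq_card, lam_eq_card, filter_insert, if_neg (by simp [LeftOf])]

lemma lam_insert_right (S : Finset Plane) (p q : Plane) : lam (insert p S) q p = lam S q p := by
  rw [lam_eq_card, lam_eq_card, filter_insert, if_neg (by simp [LeftOf])]

open Classical in
lemma lam_triple (hab : a ≠ b) (hac : a ≠ c) (hbc : b ≠ c) (x y : Plane) :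
    lam {a, b, c} x y =
      (if LeftOf x y a then 1 else 0) + (if LeftOf x y b then 1 else 0) +
        (if LeftOf x y c then 1 else 0) := by
  rw [lam_eq_card, card_filter, sum_insert (by simp [*]), sum_pair hbc, ← add_assoc]

open Classical in
lemma fS_add_fS_triple
    (hpab : det2 p a b ≠ 0) (hpbc : det2 p b c ≠ 0) (hpca : det2 p c a ≠ 0) :
    fS {a, b, c} {p} {a, b, c} + fS {a, b, c} {a, b, c} {p} =
      if (LeftOf p a b ↔ LeftOf p b c) ∧ (LeftOf p b c ↔ LeftOf p c a) then 0 else 2 := by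
  obtain ⟨-, -, hab⟩ := pairwise_ne_of_det2_ne_zero hpab
  obtain ⟨-, -, hbc⟩ := pairwise_ne_of_det2_ne_zero hpbc
  obtain ⟨-, -, hca⟩ := pairwise_ne_of_det2_ne_zero hpca
  have ha : a ∉ ({b, c} : Finset Plane) := by simp [hab, hca.symm]
  simp only [fS, sum_singleton, sum_insert ha, sum_pair hbc, lam_triple hab hca.symm hbc]
  simp only [LeftOf, det2_self_outer, det2_self_right, det2_rotate_right p, det2_swap_s16 p a b,
    det2_swap_s16 p b c, det2_swap_s16 p c a, neg_pos, lt_irrefl, if_false, zero_add, add_zero]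
  rcases hpab.lt_or_gt with h₁ | h₁ <;> rcases hpbc.lt_or_gt with h₂ | h₂ <;>
  rcases hpca.lt_or_gt with h₃ | h₃ <;>
  simp [h₁, h₂, h₃, h₁.not_gt, h₂.not_gt, h₃.not_gt]

open Classical in
lemma sum_lam_triple (habc : det2 a b c ≠ 0)
    (hpab : det2 p a b ≠ 0) (hpbc : det2 p b c ≠ 0) (hpca : det2 p c a ≠ 0) :
    ∑ q ∈ {a, b, c}, ∑ r ∈ {a, b, c} with LeftOf p q r, lam {a, b, c} q r =
      (if LeftOf p a b ↔ LeftOf a b c then 1 else 0) +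
        (if LeftOf p b c ↔ LeftOf a b c then 1 else 0) +
        (if LeftOf p c a ↔ LeftOf a b c then 1 else 0) := by
  obtain ⟨hab, hac, hbc⟩ := pairwise_ne_of_det2_ne_zero habc
  have ha : a ∉ ({b, c} : Finset Plane) := by simp [hab, hac]
  simp only [sum_filter, sum_insert ha, sum_pair hbc, lam_triple hab hac hbc]
  simp only [LeftOf, det2_self_outer, det2_self_right, det2_rotate_left a b c,
    det2_rotate_right a b c, det2_rotate_left a c b, det2_rotate_right a c b, det2_swap_s16 p a b,
    det2_swap_s16 p b c, det2_swap_s16 p c a, det2_swap_s16 a b c, neg_pos, lt_irrefl, if_false, zero_add,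
    add_zero]
  rcases habc.lt_or_gt with h₀ | h₀ <;> rcases hpab.lt_or_gt with h₁ | h₁ <;>
  rcases hpbc.lt_or_gt with h₂ | h₂ <;> rcases hpca.lt_or_gt with h₃ | h₃ <;>
  simp [h₀, h₁, h₂, h₃, h₀.not_gt, h₁.not_gt, h₂.not_gt, h₃.not_gt]

open Classical in
/-- The three sums of the insertion formula for `p` and `S`. All values of `λ` are taken in `S`
rather than `S ∪ {p}`: `p` is not strictly to the left of a line through itself. -/
noncomputable def insertionCount (S : Finset Plane) (p : Plane) : ℕ :=
  fS S {p} S + fS S S {p} + ∑ q ∈ S, ∑ r ∈ S with LeftOf p q r, lam S q r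

open Classical in
lemma insertionCount_eq_sum_powersetCard (S : Finset Plane) (p : Plane) :
    insertionCount S p = ∑ P ∈ S.powersetCard 3, insertionCount P p := by
  have hmixed (T : Finset Plane) : ∑ q ∈ T, ∑ r ∈ T with LeftOf p q r, lam T q r =
      ∑ q ∈ T, ∑ r ∈ T, ∑ s ∈ T, if LeftOf p q r ∧ LeftOf q r s then 1 else 0 := by
    simp only [sum_filter, lam_eq_card, card_filter, ite_and, sum_ite_irrel, sum_const_zero]
  simp only [insertionCount, fS, sum_singleton, hmixed, sum_add_distrib]
  simp only [lam_eq_card]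
  congr 1
  · congr 1
    · exact sum_choose_card_filter S 2 (LeftOf p) (by simp [LeftOf])
    · exact sum_choose_card_filter S 2 (fun q => LeftOf q p) (by simp [LeftOf])
  · exact sum_sum_sum_eq_sum_powersetCard S _ (by simp [LeftOf]) (by simp [LeftOf])
      (by simp [LeftOf])

open Classical in
lemma insertionCount_triple (habc : det2 a b c ≠ 0)
    (hpab : det2 p a b ≠ 0) (hpbc : det2 p b c ≠ 0) (hpca : det2 p c a ≠ 0) :
    insertionCount {a, b, c} p = (if ConvexPos {p, a, b, c} then 1 else 0) + 3 := by
  have hadd := det2_eq_add_add p a b c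
  rw [insertionCount, fS_add_fS_triple hpab hpbc hpca, sum_lam_triple habc hpab hpbc hpca]
  simp only [convexPos_iff_det2_mul_neg habc hpab hpbc hpca, LeftOf]
  rcases habc.lt_or_gt with h₀ | h₀ <;> rcases hpab.lt_or_gt with h₁ | h₁ <;>
  rcases hpbc.lt_or_gt with h₂ | h₂ <;> rcases hpca.lt_or_gt with h₃ | h₃ <;>
  first
  | (exfalso; linarith)
  | simp [mul_neg_iff, mul_pos_iff, h₀, h₁, h₂, h₃, h₀.not_gt, h₁.not_gt, h₂.not_gt, h₃.not_gt]

open Classical in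
lemma insertionCount_of_mem_powersetCard {S P : Finset Plane} (hp : p ∉ S)
    (hgp : GenPos (insert p S)) (hP : P ∈ S.powersetCard 3) :
    insertionCount P p = (if ConvexPos (insert p P) then 1 else 0) + 3 := by
  obtain ⟨hPS, hcard⟩ := mem_powersetCard.mp hP
  obtain ⟨a, b, c, hab, hac, hbc, rfl⟩ := card_eq_three.mp hcard
  have ha : a ∈ S := hPS (by simp)
  have hb : b ∈ S := hPS (by simp)
  have hc : c ∈ S := hPS (by simp)
  have hp_mem := mem_insert_self p S
  have hmem {x : Plane} (hx : x ∈ S) : x ∈ insert p S := mem_insert_of_mem hx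
  have hne {x : Plane} (hx : x ∈ S) : p ≠ x := (ne_of_mem_of_not_mem hx hp).symm
  exact insertionCount_triple
    (hgp.det2_ne_zero_s16 (hmem ha) (hmem hb) (hmem hc) hab hac hbc)
    (hgp.det2_ne_zero_s16 hp_mem (hmem ha) (hmem hb) (hne ha) (hne hb) hab)
    (hgp.det2_ne_zero_s16 hp_mem (hmem hb) (hmem hc) (hne hb) (hne hc) hbc)
    (hgp.det2_ne_zero_s16 hp_mem (hmem hc) (hmem ha) (hne hc) (hne ha) hac.symm)

open Classical in
lemma squareCount_insert {S : Finset Plane} (hp : p ∉ S) :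
    squareCount (insert p S) =
      squareCount S + #{P ∈ S.powersetCard 3 | ConvexPos (insert p P)} :=
  card_filter_powersetCard_succ_insert hp 3 ConvexPos

open Classical in
lemma squareCount_insert_add_three_mul_choose {S : Finset Plane} (hp : p ∉ S)
    (hgp : GenPos (insert p S)) :
    squareCount (insert p S) + 3 * (#S).choose 3 = squareCount S + insertionCount S p := by
  have hcount : insertionCount S p =
      #{P ∈ S.powersetCard 3 | ConvexPos (insert p P)} + 3 * (#S).choose 3 := by
    rw [insertionCount_eq_sum_powersetCard,
      sum_congr rfl fun P hP => insertionCount_of_mem_powersetCard hp hgp hP, sum_add_distrib,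
      ← card_filter, sum_const, card_powersetCard, smul_eq_mul, mul_comm 3]
  rw [squareCount_insert hp, hcount, add_assoc]

end Counting

open Classical in
theorem stmt16 (n : ℕ) (S : Finset Plane) (hcard : S.card = n) (hgp : GenPos S)
    (p : Plane) (hp : p ∉ S) (hgp' : GenPos (insert p S)) :
    (squareCount (insert p S) : ℤ) =
      (squareCount S : ℤ) + (fS (insert p S) {p} S : ℤ) + (fS (insert p S) S {p} : ℤ) +
        (∑ q ∈ S, ∑ r ∈ S.filter (fun r => LeftOf p q r), (lam S q r : ℤ)) -
        (n : ℤ) * ((n : ℤ) - 1) * ((n : ℤ) - 2) / 2 := by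
  have hcount := squareCount_insert_add_three_mul_choose hp hgp'
  have hleft : fS (insert p S) {p} S = fS S {p} S := by
    simp only [fS, sum_singleton, lam_insert_left]
  have hright : fS (insert p S) S {p} = fS S S {p} := by
    simp only [fS, sum_singleton, lam_insert_right]
  have hcubic : (n : ℤ) * ((n : ℤ) - 1) * ((n : ℤ) - 2) / 2 = 3 * n.choose 3 := by
    have := mul_sub_one_mul_sub_two_eq_six_mul_choose n
    omega
  rw [hleft, hright, hcubic]
  rw [insertionCount, hcard] at hcount
  zify at hcount
  linarith
end
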